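/- Let A be a complex r×E matrix of full row rank r, with columns indexed by the finite set E. Then the polynomial ∑_{S ⊆ E, |S| = r} |det A[S]|² · ∏_{e∈S} y_e (where A[S] is the square submatrix of A on the columns S) has the half-plane property: it is nonzero whenever y : E → ℂ satisfies Re(y_e) > 0 for all e ∈ E. Equivalently, if Y = diag(y_e : e ∈ E) with Re(y_e) > 0 for all e, then the r×r matrix A Y A* is nonsingular, where A* is the conjugate transpose of A. -/

import Mathlib

open scoped BigOperators
open Classical

noncomputable section

/-- The determinant of the square submatrix of the `r × E` matrix `A` on an `r`-element
set `S` of columns (with respect to a fixed enumeration of `S`; it is well defined up to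
sign, so its squared absolute value is canonical).  Defined as `0` when `|S| ≠ r`. -/
noncomputable def subDet {r : ℕ} {E : Type*} (A : Matrix (Fin r) E ℂ) (S : Finset E) : ℂ :=
  if h : S.card = r then
    (A.submatrix id (fun i : Fin r => ((S.equivFin.symm (Fin.cast h.symm i) : ↥S) : E))).det
  else 0

/-- Expansion of `det (M * N)` over all column selections. -/
theorem det_mul_expand {r : ℕ} {E : Type*} [Fintype E]
    (M : Matrix (Fin r) E ℂ) (N : Matrix E (Fin r) ℂ) :
    (M * N).det = ∑ f : Fin r → E, (∏ i, N (f i) i) * (M.submatrix id f).det := by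
  rw [← Matrix.det_transpose]
  have h : (M * N).transpose = fun j => ∑ e, N e j • (fun i => M i e) := by
    funext j i
    simp [Matrix.mul_apply, Matrix.transpose_apply, Finset.sum_apply, mul_comm]
  rw [h]
  change Matrix.detRowAlternating.toMultilinearMap _ = _
  rw [MultilinearMap.map_sum]
  refine Finset.sum_congr rfl fun f _ => ?_
  rw [MultilinearMap.map_smul_univ, smul_eq_mul]
  congr 1
  rw [← Matrix.det_transpose (M.submatrix id f)]
  rfl

/-- The contribution of all selections with image a given `r`-set. -/
theorem sum_fiber {r : ℕ} {E : Type*} [Fintype E]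
    (M : Matrix (Fin r) E ℂ) (N : Matrix E (Fin r) ℂ) (S : Finset E)
    (g : Fin r → E) (hg : Function.Injective g) (hS : Finset.univ.image g = S) :
    ∑ f : Fin r → E with Finset.univ.image f = S, (∏ i, N (f i) i) * (M.submatrix id f).det
      = (M.submatrix id g).det * (N.submatrix g id).det := by
  have hb : ∑ f : Fin r → E with Finset.univ.image f = S,
        (∏ i, N (f i) i) * (M.submatrix id f).det
      = ∑ σ : Equiv.Perm (Fin r), (∏ i, N (g (σ i)) i) * (M.submatrix id (g ∘ σ)).det := by
    symm
    refine Finset.sum_bij (fun σ _ => g ∘ σ) ?_ ?_ ?_ ?_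
    · intro σ _
      simp only [Finset.mem_filter, Finset.mem_univ, true_and]
      rw [← hS]
      ext e
      simp only [Finset.mem_image, Finset.mem_univ, true_and, Function.comp]
      exact ⟨fun ⟨a, h⟩ => ⟨σ a, h⟩, fun ⟨a, h⟩ => ⟨σ.symm a, by simpa using h⟩⟩
    · intro σ _ τ _ h
      ext i
      exact congrArg Fin.val (hg (congrFun h i))
    · intro f hf
      simp only [Finset.mem_filter, Finset.mem_univ, true_and] at hf
      have hx : ∀ i, ∃ j, g j = f i := by
        intro i
        have : f i ∈ Finset.univ.image g := by
          rw [hS, ← hf]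
          exact Finset.mem_image_of_mem _ (Finset.mem_univ i)
        simpa using this
      choose t ht using hx
      have hts : Function.Surjective t := by
        intro j
        have : g j ∈ Finset.univ.image f := by
          rw [hf, ← hS]
          exact Finset.mem_image_of_mem _ (Finset.mem_univ j)
        obtain ⟨i, -, hi⟩ := Finset.mem_image.1 this
        exact ⟨i, hg ((ht i).trans hi)⟩
      refine ⟨Equiv.ofBijective t (Finite.surjective_iff_bijective.1 hts), Finset.mem_univ _, ?_⟩
      funext i
      exact ht i
    · intro σ _
      rfl
  rw [hb, Matrix.det_apply' (N.submatrix g id), Finset.mul_sum]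
  refine Finset.sum_congr rfl fun σ _ => ?_
  have : M.submatrix id (g ∘ σ) = (M.submatrix id g).submatrix id σ := rfl
  rw [this, Matrix.det_permute']
  simp only [Matrix.submatrix_apply, id]
  ring

/-- The Binet–Cauchy formula for `A Y A*`. -/
theorem binet_cauchy {r : ℕ} {E : Type*} [Fintype E]
    (A : Matrix (Fin r) E ℂ) (y : E → ℂ) :
    (A * Matrix.diagonal y * A.conjTranspose).det =
    ∑ S ∈ Finset.univ.powerset.filter (fun S : Finset E => S.card = r),
        (Complex.normSq (subDet A S) : ℂ) * ∏ e ∈ S, y e := by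
  rw [Matrix.mul_assoc, det_mul_expand,
    ← Finset.sum_fiberwise (s := Finset.univ) (g := fun f : Fin r → E => Finset.univ.image f),
    Finset.powerset_univ, Finset.sum_filter]
  refine Finset.sum_congr rfl fun S _ => ?_
  split_ifs with h
  · set g : Fin r → E := fun i => ((S.equivFin.symm (Fin.cast h.symm i) : ↥S) : E) with hgdef
    have hg : Function.Injective g := by
      intro a b hab
      have := S.equivFin.symm.injective (Subtype.ext hab)
      exact Fin.cast_injective _ this
    have hS : Finset.univ.image g = S := by
      apply Finset.eq_of_subset_of_card_le
      · intro e he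
        obtain ⟨i, -, rfl⟩ := Finset.mem_image.1 he
        exact Subtype.property _
      · rw [Finset.card_image_of_injective _ hg, h]
        simp
    have hd : subDet A S = (A.submatrix id g).det := by
      rw [subDet, dif_pos h]
    have hN : (Matrix.diagonal y * A.conjTranspose).submatrix g id
        = Matrix.diagonal (fun i => y (g i)) * (A.submatrix id g).conjTranspose := by
      ext i j
      simp [Matrix.diagonal_mul]
    have hp : ∏ e ∈ S, y e = ∏ i, y (g i) := by
      rw [← hS, Finset.prod_image (fun a _ b _ hab => hg hab)]
    rw [sum_fiber A _ S g hg hS, hN, Matrix.det_mul, Matrix.det_diagonal,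
      Matrix.det_conjTranspose, hd, hp, ← Complex.mul_conj]
    simp only [← starRingEnd_apply]
    ring
  · refine Finset.sum_eq_zero fun f hf => ?_
    have hf' : Finset.univ.image f = S := (Finset.mem_filter.1 hf).2
    have hni : ¬ Function.Injective f := by
      intro hi
      apply h
      rw [← hf', Finset.card_image_of_injective _ hi]
      simp
    simp only [Function.Injective, not_forall] at hni
    obtain ⟨a, b, hab, hne⟩ := hni
    rw [Matrix.det_zero_of_column_eq hne (fun k => by simp [hab]), mul_zero]

open scoped ComplexOrder in
/-- Nonsingularity of `A Y A*`. -/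
theorem det_ne {r : ℕ} {E : Type*} [Fintype E]
    (A : Matrix (Fin r) E ℂ) (hrank : A.rank = r)
    (y : E → ℂ) (hy : ∀ e, 0 < (y e).re) :
    (A * Matrix.diagonal y * A.conjTranspose).det ≠ 0 := by
  intro h0
  obtain ⟨v, hv, hv0⟩ := Matrix.exists_mulVec_eq_zero_iff.2 h0
  apply hv
  set w := A.conjTranspose.mulVec v with hw
  have h1 : dotProduct (star w) ((Matrix.diagonal y).mulVec w) = 0 := by
    have : dotProduct (star v) ((A * Matrix.diagonal y * A.conjTranspose).mulVec v) = 0 := by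
      rw [hv0, dotProduct_zero]
    rw [← Matrix.mulVec_mulVec, ← Matrix.mulVec_mulVec, Matrix.dotProduct_mulVec] at this
    rw [hw, Matrix.star_mulVec, Matrix.conjTranspose_conjTranspose]
    exact this
  have h2 : ∑ e, (y e).re * Complex.normSq (w e) = 0 := by
    have := congrArg Complex.re h1
    simp only [dotProduct, Matrix.mulVec_diagonal, Complex.re_sum, Complex.zero_re] at this
    rw [← this]
    refine Finset.sum_congr rfl fun e _ => ?_
    simp [Complex.normSq_apply]
    ring
  have hw0 : w = 0 := by
    funext e
    have := (Finset.sum_eq_zero_iff_of_nonneg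
      (fun e _ => mul_nonneg (hy e).le (Complex.normSq_nonneg (w e)))).1 h2 e (Finset.mem_univ e)
    rcases mul_eq_zero.1 this with h | h
    · exact absurd h (hy e).ne'
    · exact Complex.normSq_eq_zero.1 h
  have hr : A.conjTranspose.rank = r := by rw [Matrix.rank_conjTranspose, hrank]
  have hinj : Function.Injective A.conjTranspose.mulVec := by
    rw [Matrix.mulVec_injective_iff, linearIndependent_iff_card_eq_finrank_span,
      Fintype.card_fin, Set.finrank, ← Matrix.rank_eq_finrank_span_cols, hr]
  exact hinj (by rw [← hw, hw0, Matrix.mulVec_zero])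

/-- For a complex `r × E` matrix `A` of full row rank `r`, the polynomial
`∑_{|S| = r} |det A[S]|² ∏_{e ∈ S} y_e` has the half-plane property; equivalently,
`A Y A*` is nonsingular whenever `Y = diag(y)` with every `Re(y_e) > 0`. -/
theorem det_AYAstar_half_plane_property {r : ℕ} {E : Type*} [Fintype E]
    (A : Matrix (Fin r) E ℂ) (hrank : A.rank = r)
    (y : E → ℂ) (hy : ∀ e, 0 < (y e).re) :
    (∑ S ∈ Finset.univ.powerset.filter (fun S : Finset E => S.card = r),
        (Complex.normSq (subDet A S) : ℂ) * ∏ e ∈ S, y e) ≠ 0 ∧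
    (A * Matrix.diagonal y * A.conjTranspose).det ≠ 0 := by
  have h := det_ne A hrank y hy
  exact ⟨by rwa [← binet_cauchy], h⟩
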